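/- Let l_1, l_2, l_3 > 0 and assume that not all three lengths are equal (¬(l_1 = l_2 = l_3)). Then the function A(β_2, β_3) = l_1 l_2 sin β_2 + l_1 l_3 sin β_3 + l_2 l_3 sin(β_3 − β_2) has exactly four critical points on the torus (ℝ/2πℤ)², and they occur in pairs of the form (β_2, β_3) and (−β_2, −β_3). -/

import Mathlib

/- Planar 3-arm with edge lengths `l₁, l₂, l₃ > 0`.  The moduli space is the torus
`(ℝ/2πℤ)² = Real.Angle × Real.Angle` with coordinates `(β₂, β₃)`; the doubled oriented
area is the `2π`-periodic function `A(β₂,β₃) = l₁l₂ sin β₂ + l₁l₃ sin β₃ +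
l₂l₃ sin (β₃ − β₂)`, so a point of the torus is critical iff both partial derivatives
of this lift vanish at any (equivalently, every) representative. -/

noncomputable section

/-- the doubled oriented area of the 3-arm (lift to ℝ²). -/
def area3 (l₁ l₂ l₃ : ℝ) (b₂ b₃ : ℝ) : ℝ :=
  l₁ * l₂ * Real.sin b₂ + l₁ * l₃ * Real.sin b₃ + l₂ * l₃ * Real.sin (b₃ - b₂)

/-- the set of critical points of the oriented area on the torus `(ℝ/2πℤ)²`. -/
def crit3 (l₁ l₂ l₃ : ℝ) : Set (Real.Angle × Real.Angle) :=
  {p | ∀ b₂ b₃ : ℝ, (b₂ : Real.Angle) = p.1 → (b₃ : Real.Angle) = p.2 →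
    deriv (fun t => area3 l₁ l₂ l₃ t b₃) b₂ = 0 ∧
    deriv (fun t => area3 l₁ l₂ l₃ b₂ t) b₃ = 0}

/-! The critical configurations are the diacyclic ones: inscribed in a circle with the two endpoints
of the arm antipodal. At a critical point the cosines of `β₂`, `β₃` and `β₃ - β₂` are `l₃ / r`,
`-l₂ / r` and `l₁ / r` for some `r`, and the vanishing Gram determinant of three coplanar unit
vectors turns this into the cubic `r ^ 3 = (l₁ ^ 2 + l₂ ^ 2 + l₃ ^ 2) * r + 2 * l₁ * l₂ * l₃`.
Subject to `|lᵢ| ≤ |r|` the cubic has exactly one positive and one negative root, and each root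
belongs to exactly one configuration and its mirror image.
-/

section Angles

theorem angle_cos_sub (a b : Real.Angle) : (a - b).cos = a.cos * b.cos + a.sin * b.sin := by
  rw [sub_eq_add_neg, Real.Angle.cos_add, Real.Angle.cos_neg, Real.Angle.sin_neg, mul_neg,
    sub_neg_eq_add]

theorem angle_eq_neg_self_iff_cos_sq_eq_one {a : Real.Angle} : a = -a ↔ a.cos ^ 2 = 1 := by
  rw [Real.Angle.eq_neg_self_iff, ← Real.Angle.sin_eq_zero_iff, ← sq_eq_zero_iff,
    ← a.cos_sq_add_sin_sq, left_eq_add]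

theorem angle_cos_sq_le_one (a : Real.Angle) : a.cos ^ 2 ≤ 1 :=
  a.cos_sq_add_sin_sq ▸ le_add_of_nonneg_right (sq_nonneg a.sin)

theorem exists_angle_cos_eq {x : ℝ} (hx : x ^ 2 ≤ 1) : ∃ a : Real.Angle, a.cos = x :=
  have ⟨hx₁, hx₂⟩ := abs_le.1 ((sq_le_one_iff_abs_le_one x).1 hx)
  ⟨Real.arccos x, by rw [Real.Angle.cos_coe, Real.cos_arccos hx₁ hx₂]⟩

/-- The Gram determinant of three coplanar unit vectors vanishes. -/
theorem angle_cos_sq_add_cos_sq_add_cos_sub_sq (a c : Real.Angle) :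
    a.cos ^ 2 + c.cos ^ 2 + (c - a).cos ^ 2 = 1 + 2 * a.cos * c.cos * (c - a).cos := by
  rw [angle_cos_sub]
  linear_combination (1 - c.cos ^ 2) * a.cos_sq_add_sin_sq + a.sin ^ 2 * c.cos_sq_add_sin_sq

theorem exists_angle_cos_eq_cos_eq_cos_sub_eq {x y z : ℝ} (hx : x ^ 2 ≤ 1) (hy : y ^ 2 ≤ 1)
    (h : x ^ 2 + y ^ 2 + z ^ 2 = 1 + 2 * x * y * z) :
    ∃ a c : Real.Angle, a.cos = x ∧ c.cos = y ∧ (c - a).cos = z := by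
  obtain ⟨a, rfl⟩ := exists_angle_cos_eq hx
  obtain ⟨c, rfl⟩ := exists_angle_cos_eq hy
  have hsin : (z - c.cos * a.cos) ^ 2 = (c.sin * a.sin) ^ 2 := by
    linear_combination h - (1 - c.cos ^ 2) * a.cos_sq_add_sin_sq
      - a.sin ^ 2 * c.cos_sq_add_sin_sq
  rcases sq_eq_sq_iff_eq_or_eq_neg.1 hsin with hz | hz
  · exact ⟨a, c, rfl, rfl, by rw [angle_cos_sub, ← hz, add_sub_cancel]⟩
  · refine ⟨a, -c, rfl, c.cos_neg, ?_⟩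
    rw [angle_cos_sub, Real.Angle.cos_neg, Real.Angle.sin_neg, neg_mul, ← hz, add_sub_cancel]

theorem eq_or_eq_neg_of_cos_eq_of_cos_sub_eq {p q : Real.Angle × Real.Angle}
    (h₁ : q.1.cos = p.1.cos) (h₂ : q.2.cos = p.2.cos)
    (h₁₂ : (q.2 - q.1).cos = (p.2 - p.1).cos) : q = p ∨ q = -p := by
  obtain ⟨a, c⟩ := p
  obtain ⟨a', c'⟩ := q
  simp only at h₁ h₂ h₁₂
  have hsin : c'.sin * a'.sin = c.sin * a.sin := by
    rw [angle_cos_sub, angle_cos_sub, h₁, h₂] at h₁₂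
    exact add_left_cancel h₁₂
  have eq_neg_of_mixed (h : -(c.sin * a.sin) = c.sin * a.sin) : c = -c ∨ a = -a := by
    simpa only [Real.Angle.eq_neg_self_iff, ← Real.Angle.sin_eq_zero_iff, ← mul_eq_zero]
      using neg_eq_self.1 h
  rcases Real.Angle.cos_eq_iff_eq_or_eq_neg.1 h₁ with rfl | rfl <;>
    rcases Real.Angle.cos_eq_iff_eq_or_eq_neg.1 h₂ with rfl | rfl
  · exact .inl rfl
  · rw [Real.Angle.sin_neg, neg_mul] at hsin
    exact (eq_neg_of_mixed hsin).imp (fun hc => by rw [← hc]) fun ha => Prod.ext ha rfl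
  · rw [Real.Angle.sin_neg, mul_neg] at hsin
    exact (eq_neg_of_mixed hsin).symm.imp (fun ha => by rw [← ha]) fun hc => Prod.ext rfl hc
  · exact .inr rfl

theorem ncard_setOf_cos_eq_cos_eq_cos_sub_eq {x y z : ℝ} (hx : x ^ 2 ≤ 1) (hy : y ^ 2 ≤ 1)
    (hxy : ¬(x ^ 2 = 1 ∧ y ^ 2 = 1)) (h : x ^ 2 + y ^ 2 + z ^ 2 = 1 + 2 * x * y * z) :
    {p : Real.Angle × Real.Angle |
      p.1.cos = x ∧ p.2.cos = y ∧ (p.2 - p.1).cos = z}.ncard = 2 := by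
  obtain ⟨a, c, rfl, rfl, rfl⟩ := exists_angle_cos_eq_cos_eq_cos_sub_eq hx hy h
  refine Set.ncard_eq_two.2 ⟨(a, c), -(a, c), fun hac => hxy ?_, ?_⟩
  · exact (Prod.ext_iff.1 hac).imp angle_eq_neg_self_iff_cos_sq_eq_one.1
      angle_eq_neg_self_iff_cos_sq_eq_one.1
  · refine Set.Subset.antisymm
      (fun q ⟨h₁, h₂, h₁₂⟩ => eq_or_eq_neg_of_cos_eq_of_cos_sub_eq h₁ h₂ h₁₂) ?_
    rintro _ (rfl | rfl)
    · exact ⟨rfl, rfl, rfl⟩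
    · exact ⟨a.cos_neg, c.cos_neg, by
        rw [Prod.fst_neg, Prod.snd_neg, ← neg_sub', Real.Angle.cos_neg]⟩

end Angles

/-- `r` is the signed diameter of a circle in which the arm with edge lengths `l₁, l₂, l₃` can be
inscribed so that its two endpoints are antipodal; the sign of `r` is the orientation of the
circle. The lengths may be signed, a negative one standing for a reversed edge. -/
structure IsSignedDiameter (l₁ l₂ l₃ r : ℝ) : Prop where
  cube_eq : r ^ 3 = (l₁ ^ 2 + l₂ ^ 2 + l₃ ^ 2) * r + 2 * l₁ * l₂ * l₃
  sq_le₁ : l₁ ^ 2 ≤ r ^ 2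
  sq_le₂ : l₂ ^ 2 ≤ r ^ 2
  sq_le₃ : l₃ ^ 2 ≤ r ^ 2

namespace IsSignedDiameter

variable {l₁ l₂ l₃ r s : ℝ}

theorem neg (h : IsSignedDiameter l₁ l₂ l₃ r) : IsSignedDiameter (-l₁) (-l₂) (-l₃) (-r) where
  cube_eq := by linear_combination -h.cube_eq
  sq_le₁ := by simpa only [neg_sq] using h.sq_le₁
  sq_le₂ := by simpa only [neg_sq] using h.sq_le₂
  sq_le₃ := by simpa only [neg_sq] using h.sq_le₃

theorem ne_zero (h : IsSignedDiameter l₁ l₂ l₃ r) (hne : ¬(l₁ ^ 2 = l₂ ^ 2 ∧ l₂ ^ 2 = l₃ ^ 2)) :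
    r ≠ 0 := by
  rintro rfl
  obtain ⟨-, h₁, h₂, h₃⟩ := h
  exact hne ⟨by linarith [sq_nonneg l₁, sq_nonneg l₂], by linarith [sq_nonneg l₂, sq_nonneg l₃]⟩

theorem eq_of_pos (hr : IsSignedDiameter l₁ l₂ l₃ r) (hs : IsSignedDiameter l₁ l₂ l₃ s)
    (hne : ¬(l₁ ^ 2 = l₂ ^ 2 ∧ l₂ ^ 2 = l₃ ^ 2)) (hr₀ : 0 < r) (hs₀ : 0 < s) : r = s := by
  wlog hrs : r ≤ s generalizing r s
  · exact (this hs hr hs₀ hr₀ (le_of_not_ge hrs)).symm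
  have hfactor : (r - s) * (r ^ 2 + r * s + s ^ 2 - (l₁ ^ 2 + l₂ ^ 2 + l₃ ^ 2)) = 0 := by
    linear_combination hr.cube_eq - hs.cube_eq
  refine (mul_eq_zero.1 hfactor).elim sub_eq_zero.1 fun hsum => absurd ?_ hne
  obtain ⟨-, h₁, h₂, h₃⟩ := hr
  have hr_mul : r ^ 2 ≤ r * s := by rw [sq]; gcongr
  have hr_sq : r ^ 2 ≤ s ^ 2 := by gcongr
  constructor <;> linarith

theorem not_sq_eq_sq_and_sq_eq_sq (h : IsSignedDiameter l₁ l₂ l₃ r)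
    (hne : ¬(l₁ ^ 2 = l₂ ^ 2 ∧ l₂ ^ 2 = l₃ ^ 2)) : ¬(l₃ ^ 2 = r ^ 2 ∧ l₂ ^ 2 = r ^ 2) := by
  rintro ⟨h₃, h₂⟩
  -- Since `(l₂ * l₃) ^ 2 = r ^ 4`, multiplying the cubic by `r` completes the square.
  have hsum : l₁ * r + l₂ * l₃ = 0 := by
    refine pow_eq_zero_iff two_ne_zero |>.1 ?_
    linear_combination -r * h.cube_eq + (l₃ ^ 2 - r ^ 2) * h₂
  have h₁ : l₁ ^ 2 = r ^ 2 := by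
    refine mul_right_cancel₀ (pow_ne_zero 2 (h.ne_zero hne)) ?_
    linear_combination (l₁ * r - l₂ * l₃) * hsum + l₃ ^ 2 * h₂ + r ^ 2 * h₃
  exact hne ⟨h₁.trans h₂.symm, h₂.trans h₃.symm⟩

end IsSignedDiameter

section Existence

theorem abs_pow_three_le (a b c : ℝ) :
    |a| ^ 3 ≤ (a ^ 2 + b ^ 2 + c ^ 2) * |a| + 2 * a * b * c := by
  have hprod : 0 ≤ |a| * (b ^ 2 + c ^ 2) + 2 * a * b * c := by
    rcases abs_choice a with ha | ha <;> have := ha ▸ abs_nonneg a <;> rw [ha]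
    · linarith [mul_nonneg this (sq_nonneg (b + c))]
    · linarith [mul_nonneg this (sq_nonneg (b - c))]
  have hcube : |a| ^ 3 = a ^ 2 * |a| := by rw [← sq_abs a]; ring
  linarith

theorem le_two_mul_pow_three {a b c m : ℝ} (ha : |a| ≤ m) (hb : |b| ≤ m) (hc : |c| ≤ m) :
    (a ^ 2 + b ^ 2 + c ^ 2) * (2 * m) + 2 * a * b * c ≤ (2 * m) ^ 3 := by
  have hm : 0 ≤ m := (abs_nonneg a).trans ha
  have hsum : a ^ 2 + b ^ 2 + c ^ 2 ≤ 3 * m ^ 2 := by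
    linarith [sq_le_sq.2 (ha.trans (le_abs_self m)), sq_le_sq.2 (hb.trans (le_abs_self m)),
      sq_le_sq.2 (hc.trans (le_abs_self m))]
  have hprod : a * b * c ≤ m ^ 3 := calc
    a * b * c ≤ |a| * |b| * |c| := by rw [← abs_mul, ← abs_mul]; exact le_abs_self _
    _ ≤ m * m * m := by gcongr
    _ = m ^ 3 := by ring
  linarith [mul_le_mul_of_nonneg_right hsum hm]

theorem exists_isSignedDiameter_pos {l₁ l₂ l₃ : ℝ}
    (hne : ¬(l₁ ^ 2 = l₂ ^ 2 ∧ l₂ ^ 2 = l₃ ^ 2)) : ∃ r > 0, IsSignedDiameter l₁ l₂ l₃ r := by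
  obtain ⟨m, hm, h₁, h₂, h₃⟩ : ∃ m, (m = |l₁| ∨ m = |l₂| ∨ m = |l₃|) ∧
      |l₁| ≤ m ∧ |l₂| ≤ m ∧ |l₃| ≤ m := ⟨max |l₁| (max |l₂| |l₃|), by grind⟩
  have hm₀ : 0 ≤ m := (abs_nonneg l₁).trans h₁
  let f (r : ℝ) : ℝ := r ^ 3 - ((l₁ ^ 2 + l₂ ^ 2 + l₃ ^ 2) * r + 2 * l₁ * l₂ * l₃)
  have hf_m : f m ≤ 0 := by
    rcases hm with rfl | rfl | rfl
    · linarith [abs_pow_three_le l₁ l₂ l₃]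
    · linarith [abs_pow_three_le l₂ l₁ l₃]
    · linarith [abs_pow_three_le l₃ l₁ l₂]
  have hf_two_mul : 0 ≤ f (2 * m) := sub_nonneg.2 (le_two_mul_pow_three h₁ h₂ h₃)
  obtain ⟨r, ⟨hmr, -⟩, hr⟩ := intermediate_value_Icc (by linarith : m ≤ 2 * m)
    (by fun_prop : ContinuousOn f _) ⟨hf_m, hf_two_mul⟩
  have sq_le_of_abs_le {l : ℝ} (hl : |l| ≤ m) : l ^ 2 ≤ r ^ 2 :=
    sq_le_sq.2 ((hl.trans hmr).trans (le_abs_self r))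
  have hdiam : IsSignedDiameter l₁ l₂ l₃ r :=
    ⟨sub_eq_zero.1 hr, sq_le_of_abs_le h₁, sq_le_of_abs_le h₂, sq_le_of_abs_le h₃⟩
  exact ⟨r, (hm₀.trans hmr).lt_of_ne' (hdiam.ne_zero hne), hdiam⟩

theorem exists_setOf_isSignedDiameter_eq_pair {l₁ l₂ l₃ : ℝ}
    (hne : ¬(l₁ ^ 2 = l₂ ^ 2 ∧ l₂ ^ 2 = l₃ ^ 2)) :
    ∃ r s, r ≠ s ∧ {t | IsSignedDiameter l₁ l₂ l₃ t} = {r, s} := by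
  have hne' : ¬((-l₁) ^ 2 = (-l₂) ^ 2 ∧ (-l₂) ^ 2 = (-l₃) ^ 2) := by simpa only [neg_sq] using hne
  obtain ⟨r, hr₀, hr⟩ := exists_isSignedDiameter_pos hne
  obtain ⟨s, hs₀, hs⟩ := exists_isSignedDiameter_pos hne'
  refine ⟨r, -s, by linarith, Set.Subset.antisymm (fun t ht => ?_) ?_⟩
  · rcases (ht.ne_zero hne).lt_or_gt with ht₀ | ht₀
    · exact .inr (neg_eq_iff_eq_neg.1 (ht.neg.eq_of_pos hs hne' (neg_pos.2 ht₀) hs₀))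
    · exact .inl (ht.eq_of_pos hr hne ht₀ hr₀)
  · rintro _ (rfl | rfl)
    · exact hr
    · simpa only [Set.mem_ofPred_eq, neg_neg] using hs.neg

end Existence

section CriticalPoints

variable {l₁ l₂ l₃ : ℝ}

theorem hasDerivAt_area3_left (l₁ l₂ l₃ b₂ b₃ : ℝ) :
    HasDerivAt (fun t => area3 l₁ l₂ l₃ t b₃)
      (l₁ * l₂ * Real.cos b₂ - l₂ * l₃ * Real.cos (b₃ - b₂)) b₂ := by
  have hdiff := ((hasDerivAt_id' b₂).const_sub b₃).sin.const_mul (l₂ * l₃)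
  have hsum := (((Real.hasDerivAt_sin b₂).const_mul (l₁ * l₂)).add_const
    (l₁ * l₃ * Real.sin b₃)).add hdiff
  exact hsum.congr_deriv (by ring)

theorem hasDerivAt_area3_right (l₁ l₂ l₃ b₂ b₃ : ℝ) :
    HasDerivAt (fun t => area3 l₁ l₂ l₃ b₂ t)
      (l₁ * l₃ * Real.cos b₃ + l₂ * l₃ * Real.cos (b₃ - b₂)) b₃ := by
  have hdiff := ((hasDerivAt_id' b₃).sub_const b₂).sin.const_mul (l₂ * l₃)
  have hsum := (((Real.hasDerivAt_sin b₃).const_mul (l₁ * l₃)).const_add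
    (l₁ * l₂ * Real.sin b₂)).add hdiff
  exact hsum.congr_deriv (by ring)

theorem mem_crit3_iff {p : Real.Angle × Real.Angle} :
    p ∈ crit3 l₁ l₂ l₃ ↔
      l₁ * l₂ * p.1.cos - l₂ * l₃ * (p.2 - p.1).cos = 0 ∧
        l₁ * l₃ * p.2.cos + l₂ * l₃ * (p.2 - p.1).cos = 0 := by
  obtain ⟨a, c⟩ := p
  simp only [crit3, Set.mem_ofPred_eq, (hasDerivAt_area3_left _ _ _ _ _).deriv,
    (hasDerivAt_area3_right _ _ _ _ _).deriv, ← Real.Angle.cos_coe, Real.Angle.coe_sub]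
  constructor
  · induction a using Real.Angle.induction_on with | _ b₂
    induction c using Real.Angle.induction_on with | _ b₃
    exact fun h => h b₂ b₃ rfl rfl
  · rintro h b₂ b₃ rfl rfl
    exact h

theorem neg_mem_crit3 {p : Real.Angle × Real.Angle} (hp : p ∈ crit3 l₁ l₂ l₃) :
    -p ∈ crit3 l₁ l₂ l₃ := by
  simpa only [mem_crit3_iff, Prod.fst_neg, Prod.snd_neg, ← neg_sub', Real.Angle.cos_neg] using hp

/-- The configurations inscribed in a circle of signed diameter `r` with antipodal endpoints. If
the `i`-th edge spans the central angle `2 * φᵢ`, then `lᵢ = r * sin φᵢ` and `φ₁ + φ₂ + φ₃ = π / 2`,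
while consecutive edges turn by `φᵢ + φᵢ₊₁`. -/
def diacyclicConfigs (l₁ l₂ l₃ r : ℝ) : Set (Real.Angle × Real.Angle) :=
  {p | p.1.cos = l₃ / r ∧ p.2.cos = -l₂ / r ∧ (p.2 - p.1).cos = l₁ / r}

theorem isSignedDiameter_of_mem_diacyclicConfigs {r : ℝ} (hr : r ≠ 0)
    {p : Real.Angle × Real.Angle} (hp : p ∈ diacyclicConfigs l₁ l₂ l₃ r) :
    IsSignedDiameter l₁ l₂ l₃ r := by
  obtain ⟨h₃, h₂, h₁⟩ := hp
  have sq_le_sq_of_div_sq_le_one {l : ℝ} (h : (l / r) ^ 2 ≤ 1) : l ^ 2 ≤ r ^ 2 := by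
    rwa [div_pow, div_le_one (by positivity)] at h
  have hgram := angle_cos_sq_add_cos_sq_add_cos_sub_sq p.1 p.2
  rw [h₁, h₂, h₃] at hgram
  refine ⟨?_, sq_le_sq_of_div_sq_le_one (h₁ ▸ angle_cos_sq_le_one _),
    neg_sq l₂ ▸ sq_le_sq_of_div_sq_le_one (h₂ ▸ angle_cos_sq_le_one _),
    sq_le_sq_of_div_sq_le_one (h₃ ▸ angle_cos_sq_le_one _)⟩
  field_simp at hgram
  linear_combination -hgram

theorem crit3_eq_biUnion_diacyclicConfigs (h₁ : l₁ ≠ 0) (h₂ : l₂ ≠ 0) (h₃ : l₃ ≠ 0) :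
    crit3 l₁ l₂ l₃ = ⋃ r ∈ {r | IsSignedDiameter l₁ l₂ l₃ r}, diacyclicConfigs l₁ l₂ l₃ r := by
  ext p
  simp only [Set.mem_iUnion, exists_prop, mem_crit3_iff]
  constructor
  · rintro ⟨e₂, e₃⟩
    have hcos₁ : p.1.cos = l₃ * (p.2 - p.1).cos / l₁ := by
      rw [eq_div_iff h₁]; exact mul_left_cancel₀ h₂ (by linear_combination e₂)
    have hcos₂ : p.2.cos = -l₂ * (p.2 - p.1).cos / l₁ := by
      rw [eq_div_iff h₁]; exact mul_left_cancel₀ h₃ (by linear_combination e₃)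
    have hcos : (p.2 - p.1).cos ≠ 0 := fun h => by
      simpa [hcos₁, hcos₂, h] using angle_cos_sq_add_cos_sq_add_cos_sub_sq p.1 p.2
    have hp : p ∈ diacyclicConfigs l₁ l₂ l₃ (l₁ / (p.2 - p.1).cos) :=
      ⟨by rwa [div_div_eq_mul_div], by rwa [div_div_eq_mul_div], (div_div_cancel₀ h₁).symm⟩
    exact ⟨_, isSignedDiameter_of_mem_diacyclicConfigs (div_ne_zero h₁ hcos) hp, hp⟩
  · rintro ⟨r, -, e₃, e₂, e₁⟩
    rw [e₁, e₂, e₃]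
    constructor <;> ring

theorem IsSignedDiameter.ncard_diacyclicConfigs {r : ℝ} (h : IsSignedDiameter l₁ l₂ l₃ r)
    (hne : ¬(l₁ ^ 2 = l₂ ^ 2 ∧ l₂ ^ 2 = l₃ ^ 2)) : (diacyclicConfigs l₁ l₂ l₃ r).ncard = 2 := by
  have hr : r ≠ 0 := h.ne_zero hne
  have hr_sq : 0 < r ^ 2 := by positivity
  apply ncard_setOf_cos_eq_cos_eq_cos_sub_eq
  · simpa only [div_pow, div_le_one hr_sq] using h.sq_le₃
  · simpa only [div_pow, neg_sq, div_le_one hr_sq] using h.sq_le₂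
  · simpa only [div_pow, neg_sq, div_eq_one_iff_eq hr_sq.ne'] using
      h.not_sq_eq_sq_and_sq_eq_sq hne
  · field_simp
    linear_combination -h.cube_eq

theorem disjoint_diacyclicConfigs (h₁ : l₁ ≠ 0) {r s : ℝ} (hrs : r ≠ s) :
    Disjoint (diacyclicConfigs l₁ l₂ l₃ r) (diacyclicConfigs l₁ l₂ l₃ s) :=
  Set.disjoint_left.2 fun _ hr hs =>
    hrs (inv_injective (mul_left_cancel₀ h₁ (hr.2.2.symm.trans hs.2.2)))

end CriticalPoints

theorem four_critical_points_general {l₁ l₂ l₃ : ℝ} (h₁ : l₁ ≠ 0) (h₂ : l₂ ≠ 0) (h₃ : l₃ ≠ 0)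
    (hne : ¬(l₁ ^ 2 = l₂ ^ 2 ∧ l₂ ^ 2 = l₃ ^ 2)) :
    (crit3 l₁ l₂ l₃).ncard = 4 ∧
      ∀ p ∈ crit3 l₁ l₂ l₃, (-p.1, -p.2) ∈ crit3 l₁ l₂ l₃ := by
  refine ⟨?_, fun _ => neg_mem_crit3⟩
  obtain ⟨r, s, hrs, hpair⟩ := exists_setOf_isSignedDiameter_eq_pair hne
  have hr : IsSignedDiameter l₁ l₂ l₃ r := hpair.ge (.inl rfl)
  have hs : IsSignedDiameter l₁ l₂ l₃ s := hpair.ge (.inr rfl)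
  have hr_card := hr.ncard_diacyclicConfigs hne
  have hs_card := hs.ncard_diacyclicConfigs hne
  rw [crit3_eq_biUnion_diacyclicConfigs h₁ h₂ h₃, hpair, Set.biUnion_pair,
    Set.ncard_union_eq (disjoint_diacyclicConfigs h₁ hrs)
      (Set.finite_of_ncard_ne_zero (by simp [hr_card]))
      (Set.finite_of_ncard_ne_zero (by simp [hs_card])), hr_card, hs_card]

/-- If the three lengths are not all equal, then `A` has exactly four
critical points on the torus, and they occur in pairs `(β₂, β₃)`, `(−β₂, −β₃)`. -/
theorem four_critical_points (l₁ l₂ l₃ : ℝ) (h₁ : 0 < l₁) (h₂ : 0 < l₂) (h₃ : 0 < l₃)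
    (hne : ¬(l₁ = l₂ ∧ l₂ = l₃)) :
    (crit3 l₁ l₂ l₃).ncard = 4 ∧
      ∀ p ∈ crit3 l₁ l₂ l₃, (-p.1, -p.2) ∈ crit3 l₁ l₂ l₃ := by
  exact four_critical_points_general h₁.ne' h₂.ne' h₃.ne'
    (by rwa [sq_eq_sq₀ h₁.le h₂.le, sq_eq_sq₀ h₂.le h₃.le])

end
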